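/- For every real number x > 0 and every integer k ≥ 1, the double inequality (k−1)!/(x+1)^k + k!/x^{k+1} < (−1)^{k+1} ψ^{(k)}(x) < (k−1)!/(x+1/2)^k + k!/x^{k+1} holds. -/

import Mathlib

/-!
The functional equation `ψ(y + 1) = ψ(y) + 1/y` and the monotonicity of `ψ` (log-convexity of `Γ`)
give `ψ(x) - ψ(1) = ∑ (1/(n+1) - 1/(x+n))` for `x > 0`: the partial sums differ from the left-hand
side by `ψ(x+n) - ψ(1+n)`, which is `O(1/n)`. Termwise differentiation yields
`(-1)^(k+1) ψ⁽ᵏ⁾(x) = k! ∑ 1/(x+n)^(k+1)` for `k ≥ 1`.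

The term `n = 0` is `k!/x^(k+1)`. Each remaining term, with `y = x + n`, is estimated by
`1/y^k - 1/(y+1)^k < k/y^(k+1) < 1/(y-1/2)^k - 1/(y+1/2)^k` (`lower_term`, `upper_term`), and the
outer expressions telescope over `n ≥ 1` to `1/(x+1)^k` and `1/(x+1/2)^k`.
-/

open Real

/-- The digamma function `ψ = Γ′/Γ`. -/
noncomputable def digamma (x : ℝ) : ℝ := deriv Real.Gamma x / Real.Gamma x

/-- The `i`-th derivative of the digamma function, `ψ⁽ⁱ⁾`, with `ψ⁽⁰⁾ = ψ`. -/
noncomputable def polygamma (i : ℕ) : ℝ → ℝ := deriv^[i] digamma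

open Filter Topology Set

lemma digamma_eq_deriv_log {y : ℝ} (hy : 0 < y) :
    digamma y = deriv (Real.log ∘ Real.Gamma) y := by
  have hd : DifferentiableAt ℝ Real.Gamma y :=
    Real.differentiableAt_Gamma fun m => by
      have : (0 : ℝ) ≤ m := m.cast_nonneg
      linarith
  exact ((hd.hasDerivAt.log (Real.Gamma_pos_of_pos hy).ne').deriv).symm

lemma digamma_monotoneOn : MonotoneOn digamma (Ioi 0) := by
  have h : MonotoneOn (deriv (Real.log ∘ Real.Gamma)) (Ioi 0) := by
    refine Real.convexOn_log_Gamma.monotoneOn_deriv fun y hy => ?_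
    have hy' : 0 < y := hy
    refine (Real.differentiableAt_Gamma fun m => ?_).log (Real.Gamma_pos_of_pos hy').ne'
    have : (0 : ℝ) ≤ m := m.cast_nonneg
    linarith
  intro a ha b hb hab
  rw [digamma_eq_deriv_log ha, digamma_eq_deriv_log hb]
  exact h ha hb hab

lemma digamma_add_one {y : ℝ} (hy : 0 < y) : digamma (y + 1) = digamma y + 1 / y := by
  have hd : DifferentiableAt ℝ Real.Gamma y :=
    Real.differentiableAt_Gamma fun m => by
      have : (0 : ℝ) ≤ m := m.cast_nonneg
      linarith
  have h1 : deriv Real.Gamma (y + 1) = Real.Gamma y + y * deriv Real.Gamma y := by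
    rw [← deriv_comp_add_const]
    have he : (fun z => Real.Gamma (z + 1)) =ᶠ[𝓝 y] fun z => z * Real.Gamma z := by
      filter_upwards [lt_mem_nhds hy] with z hz
      exact Real.Gamma_add_one hz.ne'
    rw [he.deriv_eq]
    have := ((hasDerivAt_id' y).fun_mul hd.hasDerivAt).deriv
    simpa using this
  have hG := (Real.Gamma_pos_of_pos hy).ne'
  rw [digamma, digamma, h1, Real.Gamma_add_one hy.ne']
  field_simp
  ring

lemma digamma_add_nat {y : ℝ} (hy : 0 < y) (n : ℕ) :
    digamma (y + n) = digamma y + ∑ m ∈ Finset.range n, 1 / (y + m) := by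
  induction n with
  | zero => simp
  | succ n ih =>
    rw [Finset.sum_range_succ, ← add_assoc, ← ih, ← digamma_add_one (by positivity)]
    push_cast
    ring_nf

lemma digamma_add_nat_le {y : ℝ} (hy : 0 < y) (n : ℕ) :
    digamma (y + n) ≤ digamma y + n / y := by
  rw [digamma_add_nat hy]
  have : ∑ m ∈ Finset.range n, 1 / (y + m) ≤ ∑ m ∈ Finset.range n, 1 / y := by
    refine Finset.sum_le_sum fun m _ => ?_
    exact one_div_le_one_div_of_le hy (by have : (0 : ℝ) ≤ m := m.cast_nonneg
                                          linarith)
  simp only [Finset.sum_const, Finset.card_range, nsmul_eq_mul, mul_one_div] at this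
  linarith

lemma tendsto_digamma_sub {x : ℝ} (hx : 0 < x) :
    Tendsto (fun n : ℕ => digamma (x + n) - digamma (1 + n)) atTop (𝓝 0) := by
  obtain ⟨N, hN⟩ := exists_nat_ge x
  have lim (c : ℝ) : Tendsto (fun n : ℕ => c / (n : ℝ)) atTop (𝓝 0) :=
    tendsto_const_div_atTop_nhds_zero_nat c
  refine tendsto_of_tendsto_of_tendsto_of_le_of_le' (lim (-1)) (lim N) ?_ ?_
  · filter_upwards [eventually_gt_atTop 0] with n hn
    have hn' : (0 : ℝ) < n := by exact_mod_cast hn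
    have h1 := digamma_monotoneOn (a := n) (b := x + n) hn'
      (by simp only [mem_Ioi]; positivity) (by linarith)
    have h2 := digamma_add_one hn'
    rw [add_comm] at h2
    rw [h2, neg_div]
    linarith
  · filter_upwards [eventually_gt_atTop 0] with n hn
    have hn' : (0 : ℝ) < n := by exact_mod_cast hn
    have h1 := digamma_monotoneOn (a := x + n) (b := n + N)
      (by simp only [mem_Ioi]; positivity) (by simp only [mem_Ioi]; positivity) (by linarith)
    have h2 := digamma_add_nat_le hn' N
    have h3 := digamma_monotoneOn (a := n) (b := 1 + n) hn'
      (by simp only [mem_Ioi]; positivity) (by linarith)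
    linarith

lemma summable_inv_pow {x : ℝ} (hx : 0 < x) (k : ℕ) :
    Summable fun n : ℕ => 1 / (x + n) ^ (k + 2) := by
  have h := (Real.summable_one_div_nat_add_rpow x ((k + 2 : ℕ) : ℝ)).2 (by
    push_cast
    have : (0 : ℝ) ≤ k := k.cast_nonneg
    linarith)
  refine h.congr fun n => ?_
  rw [Real.rpow_natCast, abs_of_pos (by positivity), add_comm]

lemma hasDerivAt_inv_pow {y : ℝ} (hy : 0 < y) (n k : ℕ) :
    HasDerivAt (fun z : ℝ => 1 / (z + n) ^ (k + 1)) (-((k + 1) / (y + n) ^ (k + 2))) y := by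
  have hp : y + (n : ℝ) ≠ 0 := by positivity
  have h := (((hasDerivAt_id' y).add_const (n : ℝ)).fun_pow (k + 1)).fun_inv (pow_ne_zero _ hp)
  simp only [one_div]
  refine h.congr_deriv ?_
  simp only [Nat.add_sub_cancel, mul_one]
  push_cast
  field_simp
  ring

lemma norm_deriv_le {δ y : ℝ} (hδ : 0 < δ) (hy : δ < y) (n k : ℕ) :
    ‖-(((k : ℝ) + 1) / (y + n) ^ (k + 2))‖ ≤ (k + 1) * (1 / (δ + n) ^ (k + 2)) := by
  have : 0 < y := hδ.trans hy
  rw [norm_neg, Real.norm_of_nonneg (by positivity), mul_one_div]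
  gcongr

/-- Termwise differentiation of `ψ(y) = ψ(1) + ∑ (1/(1+n) - 1/(y+n))` on a half-line `(δ, ∞)`
containing `x` and `1`, where the derivatives are dominated by `1/(δ+n)²`. The series vanishes
termwise at `1`, so this domination also gives its convergence at every other point. -/
lemma digamma_hasDerivAt {x : ℝ} (hx : 0 < x) :
    HasDerivAt digamma (∑' n : ℕ, 1 / (x + n) ^ 2) x := by
  set δ := min x 1 / 2 with hδd
  have hδ : 0 < δ := by positivity
  have hδx : δ < x := by
    have := min_le_left x 1
    have : 0 < min x 1 := by positivity
    linarith
  have hδ1 : δ < 1 := by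
    have := min_le_right x 1
    linarith
  let g : ℕ → ℝ → ℝ := fun n z => 1 / (1 + (n : ℝ)) - 1 / (z + n) ^ (0 + 1)
  let g' : ℕ → ℝ → ℝ := fun n z => -(-((((0 : ℕ) : ℝ) + 1) / (z + n) ^ (0 + 2)))
  have hu : Summable fun n : ℕ => ((((0 : ℕ) : ℝ) + 1) * (1 / (δ + n) ^ (0 + 2))) :=
    (summable_inv_pow hδ 0).mul_left _
  have hg : ∀ n y, y ∈ Ioi δ → HasDerivAt (g n) (g' n y) y := fun n y hy =>
    (hasDerivAt_inv_pow (hδ.trans hy) n 0).const_sub _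
  have hg' : ∀ n y, y ∈ Ioi δ → ‖g' n y‖ ≤ (((0 : ℕ) : ℝ) + 1) * (1 / (δ + n) ^ (0 + 2)) :=
    fun n y hy => by
      rw [norm_neg]
      exact norm_deriv_le hδ hy n 0
  have h0 : Summable fun n => g n 1 := by
    refine summable_zero.congr fun n => ?_
    simp [g]
  have hs : ∀ y ∈ Ioi δ, Summable fun n => g n y := fun y hy =>
    summable_of_summable_hasDerivAt_of_isPreconnected hu isOpen_Ioi isPreconnected_Ioi hg hg'
      (mem_Ioi.2 hδ1) h0 hy
  have hD := hasDerivAt_tsum_of_isPreconnected hu isOpen_Ioi isPreconnected_Ioi hg hg'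
      (mem_Ioi.2 hδ1) h0 (mem_Ioi.2 hδx)
  have heq : ∀ y ∈ Ioi δ, digamma y = digamma 1 + ∑' n, g n y := by
    intro y hy
    have hy0 : 0 < y := hδ.trans hy
    have h1 := (hs y hy).hasSum.tendsto_sum_nat
    have h2 : Tendsto (fun n => ∑ i ∈ Finset.range n, g i y) atTop
        (𝓝 (digamma y - digamma 1)) := by
      have := (tendsto_digamma_sub hy0).const_sub (digamma y - digamma 1)
      rw [sub_zero] at this
      refine this.congr fun n => ?_
      rw [digamma_add_nat hy0, digamma_add_nat one_pos]
      simp only [g, zero_add, pow_one, Finset.sum_sub_distrib]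
      ring
    have := tendsto_nhds_unique h1 h2
    linarith
  have hfin : HasDerivAt digamma (∑' n, g' n x) x := by
    refine (hD.const_add (digamma 1)).congr_of_eventuallyEq ?_
    filter_upwards [lt_mem_nhds hδx] with y hy
    exact heq y hy
  simpa [g'] using hfin

lemma tsum_hasDerivAt {x : ℝ} (hx : 0 < x) (k : ℕ) :
    HasDerivAt (fun z : ℝ => ∑' n : ℕ, 1 / (z + n) ^ (k + 2))
      (-((k + 2) * ∑' n : ℕ, 1 / (x + n) ^ (k + 3))) x := by
  have hδ : 0 < x / 2 := by positivity
  have hδx : x / 2 < x := by linarith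
  have hD := hasDerivAt_tsum_of_isPreconnected
    ((summable_inv_pow hδ (k + 1)).mul_left (((k + 1 : ℕ) : ℝ) + 1))
    isOpen_Ioi isPreconnected_Ioi
    (fun n y (hy : y ∈ Ioi (x / 2)) => hasDerivAt_inv_pow (hδ.trans hy) n (k + 1))
    (fun n y hy => norm_deriv_le hδ hy n (k + 1))
    (mem_Ioi.2 hδx) (summable_inv_pow hx k) (mem_Ioi.2 hδx)
  refine hD.congr_deriv ?_
  rw [← tsum_mul_left, ← tsum_neg]
  refine tsum_congr fun n => ?_
  push_cast
  ring

lemma polygamma_eq (k : ℕ) : ∀ {x : ℝ}, 0 < x →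
    polygamma (k + 1) x = (-1) ^ k * (k + 1).factorial * ∑' n : ℕ, 1 / (x + n) ^ (k + 2) := by
  induction k with
  | zero =>
    intro x hx
    simpa [polygamma] using (digamma_hasDerivAt hx).deriv
  | succ k ih =>
    intro x hx
    have he : polygamma (k + 1) =ᶠ[𝓝 x] fun z =>
        (-1) ^ k * (k + 1).factorial * ∑' n : ℕ, 1 / (z + n) ^ (k + 2) := by
      filter_upwards [lt_mem_nhds hx] with z hz
      exact ih hz
    have hp : polygamma (k + 1 + 1) x = deriv (polygamma (k + 1)) x := by
      rw [polygamma, Function.iterate_succ_apply', polygamma]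
    rw [hp, he.deriv_eq, ((tsum_hasDerivAt hx k).const_mul _).deriv, Nat.factorial_succ (k + 1)]
    push_cast
    ring

lemma lower_term {y : ℝ} (hy : 0 < y) {k : ℕ} (hk : 1 ≤ k) :
    1 / y ^ k - 1 / (y + 1) ^ k < k / y ^ (k + 1) := by
  have hk' : (0 : ℝ) < k := by exact_mod_cast hk
  have hb := one_add_mul_le_pow (a := -(1 / (y + 1))) (by
    have : 1 / (y + 1) ≤ 1 := (div_le_one (by positivity)).2 (by linarith)
    linarith) k
  have h1 : 1 + -(1 / (y + 1)) = y / (y + 1) := by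
    field_simp
    ring
  rw [h1, div_pow] at hb
  have h2 : (k : ℝ) * (1 / (y + 1)) < k * (1 / y) := by
    gcongr
    linarith
  have h3 : 1 - y ^ k / (y + 1) ^ k < k * (1 / y) := by linarith
  have h4 := div_lt_div_of_pos_right h3 (pow_pos hy k)
  have e1 : 1 / y ^ k - 1 / (y + 1) ^ k = (1 - y ^ k / (y + 1) ^ k) / y ^ k := by
    field_simp
  have e2 : (k : ℝ) / y ^ (k + 1) = k * (1 / y) / y ^ k := by
    field_simp
    ring
  rwa [e1, e2]

/-- The induction on `k` rests on
`a^(k+1) - b^(k+1) = ((a^k - b^k)(a+b) + (a^k + b^k)(a-b)) / 2`, where `a^k + b^k ≥ 2` by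
Bernoulli's inequality. Used with `a = y/(y-1/2)`, `b = y/(y+1/2)` and `c = 1/y`. -/
lemma pow_sub_pow_gt {a b c : ℝ} (ha : 0 ≤ a) (hb : 0 ≤ b) (hab : 2 ≤ a + b) (hc : 0 < c)
    (hd : c < a - b) (k : ℕ) : (k + 1) * c < a ^ (k + 1) - b ^ (k + 1) := by
  induction k with
  | zero => simpa using hd
  | succ k ih =>
    have h1 := one_add_mul_le_pow (a := a - 1) (by linarith) (k + 1)
    have h2 := one_add_mul_le_pow (a := b - 1) (by linarith) (k + 1)
    simp only [add_sub_cancel] at h1 h2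
    have h3 : (2 : ℝ) ≤ a ^ (k + 1) + b ^ (k + 1) := by
      have : 0 ≤ ((k + 1 : ℕ) : ℝ) * (a + b - 2) := mul_nonneg (by positivity) (by linarith)
      linarith
    have h4 : 0 ≤ a ^ (k + 1) - b ^ (k + 1) := le_trans (by positivity) ih.le
    have h5 := mul_nonneg h4 (sub_nonneg.2 hab)
    have h6 := mul_nonneg (sub_nonneg.2 h3) (hc.trans hd).le
    have h7 : a ^ (k + 1 + 1) - b ^ (k + 1 + 1) =
        ((a ^ (k + 1) - b ^ (k + 1)) * (a + b) + (a ^ (k + 1) + b ^ (k + 1)) * (a - b)) / 2 := by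
      ring
    rw [h7]
    push_cast
    linarith

lemma upper_term {y : ℝ} (hy : 1 / 2 < y) {k : ℕ} (hk : 1 ≤ k) :
    k / y ^ (k + 1) < 1 / (y - 1 / 2) ^ k - 1 / (y + 1 / 2) ^ k := by
  obtain ⟨k, rfl⟩ := Nat.exists_eq_add_of_le' hk
  have hy0 : 0 < y := by linarith
  have hm : 0 < y - 1 / 2 := by linarith
  have hp : 0 < y + 1 / 2 := by linarith
  have hs : y / (y - 1 / 2) + y / (y + 1 / 2) = 2 * y ^ 2 / ((y - 1 / 2) * (y + 1 / 2)) := by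
    rw [div_add_div _ _ hm.ne' hp.ne']
    ring
  have hd : y / (y - 1 / 2) - y / (y + 1 / 2) = y / ((y - 1 / 2) * (y + 1 / 2)) := by
    rw [div_sub_div _ _ hm.ne' hp.ne']
    ring
  have h := pow_sub_pow_gt (a := y / (y - 1 / 2)) (b := y / (y + 1 / 2)) (c := 1 / y)
    (by positivity) (by positivity)
    (by
      rw [hs, le_div_iff₀ (by positivity)]
      nlinarith)
    (by positivity)
    (by
      rw [hd, div_lt_div_iff₀ hy0 (by positivity)]
      nlinarith) k
  have h4 := div_lt_div_of_pos_right h (pow_pos hy0 (k + 1))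
  rw [div_pow, div_pow] at h4
  have e1 : ((k + 1 : ℕ) : ℝ) / y ^ (k + 1 + 1) = (k + 1) * (1 / y) / y ^ (k + 1) := by
    push_cast
    field_simp
    ring
  have e2 : 1 / (y - 1 / 2) ^ (k + 1) - 1 / (y + 1 / 2) ^ (k + 1) =
      (y ^ (k + 1) / (y - 1 / 2) ^ (k + 1) - y ^ (k + 1) / (y + 1 / 2) ^ (k + 1)) /
        y ^ (k + 1) := by
    field_simp
  rwa [e1, e2]

lemma hasSum_telescope {c : ℝ} (hc : 0 < c) {k : ℕ} (hk : 1 ≤ k) :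
    HasSum (fun n : ℕ => 1 / (c + n) ^ k - 1 / (c + n + 1) ^ k) (1 / c ^ k) := by
  rw [hasSum_iff_tendsto_nat_of_nonneg]
  · have h : Tendsto (fun n : ℕ => 1 / (c + n) ^ k) atTop (𝓝 0) := by
      simp only [one_div]
      refine Tendsto.inv_tendsto_atTop ((tendsto_pow_atTop (by omega)).comp ?_)
      exact tendsto_atTop_add_const_left _ _ tendsto_natCast_atTop_atTop
    have h' := h.const_sub (1 / c ^ k)
    rw [sub_zero] at h'
    refine h'.congr fun n => ?_
    have := Finset.sum_range_sub' (fun n : ℕ => 1 / (c + n) ^ k) n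
    simp only [Nat.cast_zero, add_zero, Nat.cast_add, Nat.cast_one, ← add_assoc] at this
    exact this.symm
  · intro n
    rw [sub_nonneg]
    exact one_div_le_one_div_of_le (by positivity)
      (pow_le_pow_left₀ (by positivity) (by linarith) k)

theorem stmt_9 (x : ℝ) (hx : 0 < x) (k : ℕ) (hk : 1 ≤ k) :
    ((k - 1).factorial : ℝ) / (x + 1) ^ k + (k.factorial : ℝ) / x ^ (k + 1) <
        (-1 : ℝ) ^ (k + 1) * polygamma k x ∧
      (-1 : ℝ) ^ (k + 1) * polygamma k x <
        ((k - 1).factorial : ℝ) / (x + 1/2) ^ k + (k.factorial : ℝ) / x ^ (k + 1) := by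
  obtain ⟨j, rfl⟩ := Nat.exists_eq_add_of_le' hk
  have hx1 : 0 < x + 1 := by positivity
  have hS := summable_inv_pow hx j
  -- The tail `n ≥ 1` of the series is the same series started at `x + 1`.
  have hsplit : ∑' n : ℕ, 1 / (x + n) ^ (j + 2) =
      1 / x ^ (j + 2) + ∑' n : ℕ, 1 / (x + 1 + n) ^ (j + 2) := by
    rw [hS.tsum_eq_zero_add]
    simp only [Nat.cast_zero, add_zero, Nat.cast_add, Nat.cast_one]
    congr 1
    refine tsum_congr fun n => ?_
    ring_nf
  have hT := (summable_inv_pow hx1 j).hasSum.mul_left ((j + 1 : ℕ) : ℝ)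
  have hlo : 1 / (x + 1) ^ (j + 1) <
      ((j + 1 : ℕ) : ℝ) * ∑' n : ℕ, 1 / (x + 1 + n) ^ (j + 2) := by
    have hterm (n : ℕ) := lower_term (y := x + 1 + n) (by positivity) hk
    refine hasSum_lt (i := 0) (fun n => ?_) ?_ (hasSum_telescope hx1 hk) hT
    · rw [mul_one_div]
      exact (hterm n).le
    · rw [mul_one_div]
      exact hterm 0
  have hup : ((j + 1 : ℕ) : ℝ) * ∑' n : ℕ, 1 / (x + 1 + n) ^ (j + 2) <
      1 / (x + 1 / 2) ^ (j + 1) := by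
    have hterm (n : ℕ) : ((j + 1 : ℕ) : ℝ) * (1 / (x + 1 + n) ^ (j + 2)) <
        1 / (x + 1 / 2 + n) ^ (j + 1) - 1 / (x + 1 / 2 + n + 1) ^ (j + 1) := by
      have hn : (0 : ℝ) ≤ n := n.cast_nonneg
      have h := upper_term (y := x + 1 + n) (by linarith) hk
      rw [mul_one_div]
      convert h using 4 <;> ring
    exact hasSum_lt (i := 0) (fun n => (hterm n).le) (hterm 0) hT
      (hasSum_telescope (by positivity) hk)
  have hpoly : (-1 : ℝ) ^ (j + 1 + 1) * polygamma (j + 1) x =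
      (j.factorial : ℝ) * (((j + 1 : ℕ) : ℝ) * ∑' n : ℕ, 1 / (x + 1 + n) ^ (j + 2)) +
        ((j + 1).factorial : ℝ) / x ^ (j + 1 + 1) := by
    have hsign : (-1 : ℝ) ^ (j + 1 + 1) * (-1) ^ j = 1 := by
      rw [← pow_add]
      exact Even.neg_one_pow ⟨j + 1, by ring⟩
    rw [polygamma_eq j hx, hsplit, ← mul_assoc, ← mul_assoc, hsign, Nat.factorial_succ]
    push_cast
    ring
  have hf : (0 : ℝ) < j.factorial := by exact_mod_cast j.factorial_pos
  have h1 := mul_lt_mul_of_pos_left hlo hf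
  have h2 := mul_lt_mul_of_pos_left hup hf
  rw [mul_one_div] at h1 h2
  rw [hpoly, Nat.add_sub_cancel]
  constructor <;> linarith
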